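/- (Chain-structured systems admit k-step linear prediction.) The chain-structured system with nonlinearity concentrated in x_k (as defined in the context) admits an N-step linear predictor for every N ∈ {1, …, k}. -/

import Mathlib

open Matrix

noncomputable section

/-- Index type for a block-partitioned state `x = col(x₁, …, x_K)` with
`x_i ∈ ℝ^{dims i}`. -/
abbrev Blk {K : ℕ} (dims : Fin K → ℕ) : Type := (i : Fin K) × Fin (dims i)

/-- The `i`-th block of a block-partitioned state. -/
def blk {K : ℕ} {dims : Fin K → ℕ} (x : Blk dims → ℝ) (i : Fin K) : Fin (dims i) → ℝ :=
  fun j => x ⟨i, j⟩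

/-- The `N`-step iterated dynamics `f_N`. -/
def iterDyn {ι : Type} {m : ℕ} (f : (ι → ℝ) → (Fin m → ℝ) → (ι → ℝ)) :
    (N : ℕ) → (ι → ℝ) → (Fin N → (Fin m → ℝ)) → (ι → ℝ)
  | 0, x, _ => x
  | N + 1, x, u => f (iterDyn f N x (fun i => u i.castSucc)) (u (Fin.last N))

/-- The system `x⁺ = f(x,u)` admits an `N`-step linear predictor on `X`, `U`. -/
def HasNStepLinearPredictor {ι : Type} [Fintype ι] {m : ℕ}
    (f : (ι → ℝ) → (Fin m → ℝ) → (ι → ℝ))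
    (X : Set (ι → ℝ)) (U : Set (Fin m → ℝ)) (N : ℕ) : Prop :=
  ∃ (Φ : (ι → ℝ) → (ι → ℝ)) (B : Matrix ι (Fin N × Fin m) ℝ),
    ∀ x ∈ X, ∀ u : Fin N → (Fin m → ℝ), (∀ i, u i ∈ U) →
      iterDyn f N x u = Φ x + B.mulVec (fun p => u p.1 p.2)

/-- The chain-structured system with nonlinearity concentrated in the last block
(`k+1` blocks, indexed `0, …, k`, corresponding to the paper's `x₁, …, x_k`):
`x₁⁺ = M₁u + C₁x_{1:k−1} + g₁(x_k)`, `x_i⁺ = M_i x_{i−1} + C_i x_{i:k−1} + g_i(x_k)`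
for `i = 2, …, k−1`, and `x_k⁺ = M_k x_{k−1} + g_k(x_k)`, where each `C_i` only acts on the
blocks `x_{i:k−1}` (encoded by a column-support condition), and `M_i` has full row rank for
`i = 1, …, k−1` (all `M`'s except the last one). -/
def IsChainSystem {k m : ℕ} (dims : Fin (k + 1) → ℕ)
    (f : (Blk dims → ℝ) → (Fin m → ℝ) → (Blk dims → ℝ))
    (X : Set (Blk dims → ℝ)) (U : Set (Fin m → ℝ))
    (M₀ : Matrix (Fin (dims 0)) (Fin m) ℝ)
    (M : (i : Fin k) → Matrix (Fin (dims i.succ)) (Fin (dims i.castSucc)) ℝ)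
    (C : (i : Fin (k + 1)) → Matrix (Fin (dims i)) (Blk dims) ℝ)
    (g : (i : Fin (k + 1)) → (Fin (dims (Fin.last k)) → ℝ) → Fin (dims i) → ℝ) : Prop :=
  (∀ i : Fin (k + 1), ∀ q : Blk dims,
      ¬((i : ℕ) ≤ (q.1 : ℕ) ∧ (q.1 : ℕ) < k) → ∀ j, C i j q = 0) ∧
  M₀.rank = dims 0 ∧
  (∀ i : Fin k, (i : ℕ) < k - 1 → (M i).rank = dims i.succ) ∧
  (∀ x ∈ X, ∀ u ∈ U,
    blk (f x u) 0 = M₀.mulVec u + (C 0).mulVec x + g 0 (blk x (Fin.last k)) ∧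
    ∀ i : Fin k,
      blk (f x u) i.succ =
        (M i).mulVec (blk x i.castSucc) + (C i.succ).mulVec x +
          g i.succ (blk x (Fin.last k)))

/-!
Write the dynamics as `x⁺ = A x + B u + φ x` with `φ` nonlinear. If `φ` is invariant under
translation by every `A ^ i (B v)` with `i + 1 < N`, then `φ` does not feel the inputs during the
first `N` steps, so the unforced trajectory and the linear forced response simply add up. In a chain
system, `A` moves the support of a state by at most one block towards the last block and `B` enters
the first block, so an input needs as many steps as there are blocks to reach the last one, which is
the only block that `φ` reads.
-/

section ReachabilityMap

variable {R E F α : Type*} [CommSemiring R] [AddCommMonoid E] [Module R E] [AddCommMonoid F]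
  [Module R F] {N : ℕ}

/-- The `N`-step reachability map `u ↦ A ^ (N - 1) B u₀ + ⋯ + A B u_{N-2} + B u_{N-1}` of the pair
`(A, B)`: the state that the linear system `x⁺ = A x + B u` reaches from the origin. -/
def reachabilityMap (A : F →ₗ[R] F) (B : E →ₗ[R] F) (N : ℕ) : (Fin N → E) →ₗ[R] F :=
  ∑ i : Fin N, (A ^ (i.rev : ℕ)) ∘ₗ B ∘ₗ LinearMap.proj i

theorem reachabilityMap_apply (A : F →ₗ[R] F) (B : E →ₗ[R] F) (u : Fin N → E) :
    reachabilityMap A B N u = ∑ i : Fin N, (A ^ (i.rev : ℕ)) (B (u i)) := by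
  simp only [reachabilityMap, LinearMap.sum_apply, LinearMap.comp_apply, LinearMap.proj_apply]

theorem reachabilityMap_succ (A : F →ₗ[R] F) (B : E →ₗ[R] F) (u : Fin (N + 1) → E) :
    reachabilityMap A B (N + 1) u =
      A (reachabilityMap A B N fun i => u i.castSucc) + B (u (Fin.last N)) := by
  simp only [reachabilityMap_apply, Fin.sum_univ_castSucc, Fin.rev_castSucc, Fin.val_succ,
    pow_succ', Module.End.mul_apply, map_sum, Fin.rev_last, Fin.val_zero, pow_zero,
    Module.End.one_apply]

theorem periodic_reachabilityMap {A : F →ₗ[R] F} {B : E →ₗ[R] F} {φ : F → α}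
    (hφ : ∀ i < N, ∀ v, Function.Periodic φ ((A ^ i) (B v))) (u : Fin N → E) :
    Function.Periodic φ (reachabilityMap A B N u) := by
  rw [reachabilityMap_apply]
  exact Finset.sum_induction _ (Function.Periodic φ) (fun _ _ => Function.Periodic.add_period)
    (Function.periodic_with_period_zero φ) fun i _ => hφ _ i.rev.isLt _

end ReachabilityMap

section Iteration

variable {ι : Type} {m : ℕ} {f : (ι → ℝ) → (Fin m → ℝ) → (ι → ℝ)}
  {X : Set (ι → ℝ)} {U : Set (Fin m → ℝ)}

theorem iterDyn_mem (hf : ∀ x ∈ X, ∀ u ∈ U, f x u ∈ X) {x : ι → ℝ} (hx : x ∈ X) :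
    ∀ {N : ℕ} {u : Fin N → Fin m → ℝ}, (∀ i, u i ∈ U) → iterDyn f N x u ∈ X
  | 0, _, _ => hx
  | _ + 1, _, hu => hf _ (iterDyn_mem hf hx fun _ => hu _) _ (hu _)

theorem iterDyn_eq_iterate_add_reachabilityMap (hf : ∀ x ∈ X, ∀ u ∈ U, f x u ∈ X)
    {A : (ι → ℝ) →ₗ[ℝ] ι → ℝ} {B : (Fin m → ℝ) →ₗ[ℝ] ι → ℝ} {φ : (ι → ℝ) → ι → ℝ}
    (hfA : ∀ x ∈ X, ∀ u ∈ U, f x u = A x + B u + φ x) {N : ℕ}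
    (hφ : ∀ i, i + 1 < N → ∀ v, Function.Periodic φ ((A ^ i) (B v)))
    {x : ι → ℝ} (hx : x ∈ X) {u : Fin N → Fin m → ℝ} (hu : ∀ i, u i ∈ U) :
    iterDyn f N x u = (fun y => A y + φ y)^[N] x + reachabilityMap A B N u := by
  induction N with
  | zero => simp [iterDyn, reachabilityMap_apply]
  | succ N ih =>
    set y := (fun y => A y + φ y)^[N] x
    set r := reachabilityMap A B N fun i => u i.castSucc
    have hy : iterDyn f N x (fun i => u i.castSucc) = y + r :=
      ih (fun i hi => hφ i (by omega)) fun _ => hu _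
    have hr : φ (y + r) = φ y := periodic_reachabilityMap (fun i hi => hφ i (by omega)) _ y
    calc iterDyn f (N + 1) x u
        = A (y + r) + B (u (Fin.last N)) + φ (y + r) := by
          rw [iterDyn, hfA _ (iterDyn_mem hf hx fun _ => hu _) _ (hu _), hy]
      _ = (A y + φ y) + (A r + B (u (Fin.last N))) := by
          rw [hr, map_add]
          abel
      _ = (fun y => A y + φ y)^[N + 1] x + reachabilityMap A B (N + 1) u := by
          rw [Function.iterate_succ_apply', reachabilityMap_succ]

theorem hasNStepLinearPredictor_of_linearMap [Fintype ι] {N : ℕ} (Φ : (ι → ℝ) → ι → ℝ)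
    (L : (Fin N → Fin m → ℝ) →ₗ[ℝ] ι → ℝ)
    (h : ∀ x ∈ X, ∀ u : Fin N → Fin m → ℝ, (∀ i, u i ∈ U) → iterDyn f N x u = Φ x + L u) :
    HasNStepLinearPredictor f X U N := by
  refine ⟨Φ, LinearMap.toMatrix' (L ∘ₗ (LinearEquiv.curry ℝ ℝ (Fin N) (Fin m)).toLinearMap),
    fun x hx u hu => ?_⟩
  rw [h x hx u hu, LinearMap.toMatrix'_mulVec]
  rfl

theorem chain_system_admits_k_step_prediction_general [Fintype ι]
    (hf : ∀ x ∈ X, ∀ u ∈ U, f x u ∈ X)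
    (A : (ι → ℝ) →ₗ[ℝ] ι → ℝ) (B : (Fin m → ℝ) →ₗ[ℝ] ι → ℝ) (φ : (ι → ℝ) → ι → ℝ)
    (hfA : ∀ x ∈ X, ∀ u ∈ U, f x u = A x + B u + φ x) {N : ℕ}
    (hφ : ∀ i, i + 1 < N → ∀ v, Function.Periodic φ ((A ^ i) (B v))) :
    HasNStepLinearPredictor f X U N :=
  hasNStepLinearPredictor_of_linearMap (fun y => A y + φ y)^[N] (reachabilityMap A B N)
    fun _ hx _ hu => iterDyn_eq_iterate_add_reachabilityMap hf hfA hφ hx hu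

end Iteration

section Chain

variable {k m : ℕ} {dims : Fin (k + 1) → ℕ}

/-- The part of the chain dynamics that is linear in the state, `M_i x_{i-1} + C_i x` in block
`i`, where the `M` term is missing for the first block because its `M` acts on the input.
`LinearMap.funLeft ℝ ℝ fun j => ⟨i, j⟩` is `blk · i` as a linear map. -/
def chainStateMap (M : (i : Fin k) → Matrix (Fin (dims i.succ)) (Fin (dims i.castSucc)) ℝ)
    (C : (i : Fin (k + 1)) → Matrix (Fin (dims i)) (Blk dims) ℝ) :
    (Blk dims → ℝ) →ₗ[ℝ] Blk dims → ℝ :=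
  LinearMap.pi fun p => LinearMap.proj p.2 ∘ₗ
    (Fin.cases (motive := fun i => (Blk dims → ℝ) →ₗ[ℝ] Fin (dims i) → ℝ) 0
      (fun i => (M i).mulVecLin ∘ₗ LinearMap.funLeft ℝ ℝ fun j => ⟨i.castSucc, j⟩) p.1 +
    (C p.1).mulVecLin)

/-- The part of the chain dynamics that is linear in the input: `M₀ u` in the first block, zero in
the others. -/
def chainInputMap (M₀ : Matrix (Fin (dims 0)) (Fin m) ℝ) : (Fin m → ℝ) →ₗ[ℝ] Blk dims → ℝ :=
  LinearMap.pi fun p => LinearMap.proj p.2 ∘ₗ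
    Fin.cases (motive := fun i => (Fin m → ℝ) →ₗ[ℝ] Fin (dims i) → ℝ) M₀.mulVecLin (fun _ => 0) p.1

/-- The nonlinear part of the chain dynamics, `g_i (x_k)` in block `i`. -/
def chainNonlinearity (g : (i : Fin (k + 1)) → (Fin (dims (Fin.last k)) → ℝ) → Fin (dims i) → ℝ)
    (x : Blk dims → ℝ) : Blk dims → ℝ :=
  fun p => g p.1 (blk x (Fin.last k)) p.2

variable {M₀ : Matrix (Fin (dims 0)) (Fin m) ℝ}
  {M : (i : Fin k) → Matrix (Fin (dims i.succ)) (Fin (dims i.castSucc)) ℝ}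
  {C : (i : Fin (k + 1)) → Matrix (Fin (dims i)) (Blk dims) ℝ}
  {g : (i : Fin (k + 1)) → (Fin (dims (Fin.last k)) → ℝ) → Fin (dims i) → ℝ}

theorem blk_chainStateMap_zero (x : Blk dims → ℝ) : blk (chainStateMap M C x) 0 = C 0 *ᵥ x := by
  ext j
  simp [blk, chainStateMap]

theorem blk_chainStateMap_succ (x : Blk dims → ℝ) (i : Fin k) :
    blk (chainStateMap M C x) i.succ = M i *ᵥ blk x i.castSucc + C i.succ *ᵥ x :=
  rfl

theorem blk_chainInputMap_zero (v : Fin m → ℝ) : blk (chainInputMap M₀ v) 0 = M₀ *ᵥ v :=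
  rfl

theorem blk_chainInputMap_succ (v : Fin m → ℝ) (i : Fin k) :
    blk (chainInputMap M₀ v) i.succ = 0 :=
  rfl

theorem IsChainSystem.apply_eq {f : (Blk dims → ℝ) → (Fin m → ℝ) → (Blk dims → ℝ)}
    {X : Set (Blk dims → ℝ)} {U : Set (Fin m → ℝ)} (h : IsChainSystem dims f X U M₀ M C g) :
    ∀ x ∈ X, ∀ u ∈ U,
      f x u = chainStateMap M C x + chainInputMap M₀ u + chainNonlinearity g x := by
  intro x hx u hu
  obtain ⟨h_zero, h_succ⟩ := h.2.2.2 x hx u hu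
  suffices ∀ i, blk (f x u) i = blk (chainStateMap M C x) i + blk (chainInputMap M₀ u) i +
      g i (blk x (Fin.last k)) from funext fun p => congrFun (this p.1) p.2
  refine Fin.cases ?_ fun i => ?_
  · rw [h_zero, blk_chainStateMap_zero, blk_chainInputMap_zero, add_comm (M₀ *ᵥ u)]
  · rw [h_succ, blk_chainStateMap_succ, blk_chainInputMap_succ, add_zero]

theorem blk_chainStateMap_eq_zero (hC : ∀ i (q : Blk dims), q.1 < i → ∀ j, C i j q = 0)
    {n : ℕ} {x : Blk dims → ℝ} (hx : ∀ i : Fin (k + 1), n ≤ (i : ℕ) → blk x i = 0)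
    {i : Fin (k + 1)} (hi : n < (i : ℕ)) : blk (chainStateMap M C x) i = 0 := by
  have hCx : C i *ᵥ x = 0 := by
    ext j
    refine Finset.sum_eq_zero fun q _ => mul_eq_zero.mpr ?_
    obtain hq | hq := lt_or_ge q.1 i
    · exact .inl (hC i q hq j)
    · exact .inr (congrFun (hx q.1 (by omega)) q.2)
  cases i using Fin.cases with
  | zero => rw [blk_chainStateMap_zero, hCx]
  | succ i =>
    rw [blk_chainStateMap_succ, hCx, hx i.castSucc (Nat.le_of_lt_succ hi), mulVec_zero, add_zero]

theorem blk_chainStateMap_pow_chainInputMap_eq_zero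
    (hC : ∀ i (q : Blk dims), q.1 < i → ∀ j, C i j q = 0) (v : Fin m → ℝ) (n : ℕ) :
    ∀ i : Fin (k + 1), n < (i : ℕ) → blk ((chainStateMap M C ^ n) (chainInputMap M₀ v)) i = 0 := by
  induction n with
  | zero =>
    intro i hi
    obtain ⟨i, rfl⟩ := Fin.exists_succ_eq.mpr (Fin.pos_iff_ne_zero.mp hi)
    exact blk_chainInputMap_succ v i
  | succ n ih =>
    intro i hi
    rw [pow_succ', Module.End.mul_apply]
    exact blk_chainStateMap_eq_zero hC ih hi

theorem periodic_chainNonlinearity {v : Blk dims → ℝ} (hv : blk v (Fin.last k) = 0) :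
    Function.Periodic (chainNonlinearity g) v := by
  intro x
  have hx : blk (x + v) (Fin.last k) = blk x (Fin.last k) + blk v (Fin.last k) := rfl
  unfold chainNonlinearity
  rw [hx, hv, add_zero]

end Chain

/-- **Chain-structured systems admit `k`-step linear prediction.**  A chain-structured
system with `k` blocks (here: `k+1` Lean-blocks, the paper's `k` equals `k+1`) admits an
`N`-step linear predictor for every `N ∈ {1, …, k}`. -/
theorem chain_system_admits_k_step_prediction
    {k m : ℕ} (dims : Fin (k + 1) → ℕ)
    (f : (Blk dims → ℝ) → (Fin m → ℝ) → (Blk dims → ℝ))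
    (X : Set (Blk dims → ℝ)) (U : Set (Fin m → ℝ))
    (hf : ∀ x ∈ X, ∀ u ∈ U, f x u ∈ X)
    (M₀ : Matrix (Fin (dims 0)) (Fin m) ℝ)
    (M : (i : Fin k) → Matrix (Fin (dims i.succ)) (Fin (dims i.castSucc)) ℝ)
    (C : (i : Fin (k + 1)) → Matrix (Fin (dims i)) (Blk dims) ℝ)
    (g : (i : Fin (k + 1)) → (Fin (dims (Fin.last k)) → ℝ) → Fin (dims i) → ℝ)
    (hchain : IsChainSystem dims f X U M₀ M C g) :
    ∀ N : ℕ, 1 ≤ N → N ≤ k + 1 → HasNStepLinearPredictor f X U N := by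
  intro N _ hN
  refine chain_system_admits_k_step_prediction_general hf _ _ _ hchain.apply_eq fun n hn v => ?_
  exact periodic_chainNonlinearity <| blk_chainStateMap_pow_chainInputMap_eq_zero
    (fun i q hq => hchain.1 i q (by omega)) v n (Fin.last k) (by rw [Fin.val_last]; omega)
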